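/- arXiv:1506.08484 — 2 statements merged into one kernel-verified Lean document; each statement's English description precedes it below -/
import Mathlib

section
/- Let k ∈ {0,1}. Suppose m₀ is the unique maximizer of 𝑝̃ on [0,1], that L₁^{(ℓ)}(m₀) = 0 for all 0 ≤ ℓ ≤ 2k, and that L₁^{(2k+1)}(m₀) > 0. Set W = (M − N·m₀)/N^{(2k+1)/(2k+2)}, where M = ∑σ_i and σ is drawn from the weighted Curie–Weiss Gibbs measure. Then there exists a constant K such that E[W^{2k+2}] ≤ K for all N ≥ 1. -/
open Real Finset MeasureTheory

noncomputable section

/-- Dimer configurations (matchings of the complete graph on `Fin N`), encoded as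
involutions of `Fin N`: fixed points are monomers, 2-cycles are dimers. -/
abbrev Dimer (N : ℕ) := {f : Fin N → Fin N // ∀ i, f (f i) = i}

/-- The set of monomers (dimer-free vertices) of a dimer configuration. -/
def monomers {N : ℕ} (D : Dimer N) : Finset (Fin N) :=
  Finset.univ.filter fun i => D.1 i = i

/-- Monomer density `m(D) = |𝓜(D)|/N`. -/
def mDim {N : ℕ} (D : Dimer N) : ℝ := ((monomers D).card : ℝ) / N

/-- The parameter `b = (log N)/2 + h - J`. -/
def bIMD (N : ℕ) (J h : ℝ) : ℝ := Real.log N / 2 + h - J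

/-- The Gibbs weight `exp(-H(D)) = exp(N (a m(D)^2 + b m(D)))` with `a = J`. -/
def wDim (N : ℕ) (J h : ℝ) (D : Dimer N) : ℝ :=
  Real.exp (N * (J * mDim D ^ 2 + bIMD N J h * mDim D))

/-- The probability of an event `A` under the IMD Gibbs measure. -/
def probDim (N : ℕ) (J h : ℝ) (A : Dimer N → Prop) : ℝ :=
  (∑ D : Dimer N, Set.indicator {D | A D} (wDim N J h) D) / ∑ D : Dimer N, wDim N J h D

/-- The conditional probability `ℙ(A | B)` under the IMD Gibbs measure. -/
def condProbDim (N : ℕ) (J h : ℝ) (A B : Dimer N → Prop) : ℝ :=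
  (∑ D : Dimer N, Set.indicator {D | A D ∧ B D} (wDim N J h) D) /
    ∑ D : Dimer N, Set.indicator {D | B D} (wDim N J h) D

/-- `g(x) = (√(e^{4x} + 4 e^{2x}) - e^{2x})/2`. -/
def gFun (x : ℝ) : ℝ := (Real.sqrt (Real.exp (4*x) + 4 * Real.exp (2*x)) - Real.exp (2*x)) / 2

/-- `τ(x) = (2x-1)J + h`. -/
def tauFun (J h x : ℝ) : ℝ := (2*x - 1) * J + h

/-- `𝑝̃(m) = -J m² - (1 - g(τ(m)) + log(1 - g(τ(m))))/2`. -/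
def ptilde (J h m : ℝ) : ℝ :=
  -J * m^2 - (1 - gFun (tauFun J h m) + Real.log (1 - gFun (tauFun J h m))) / 2

/-- The CDF of a centered Gaussian with variance `v`, evaluated at `z`. -/
def gaussCDF (v : ℝ) (z : ℝ) : ℝ :=
  (ProbabilityTheory.gaussianReal 0 (Real.toNNReal v) (Set.Iic z)).toReal

/-- Spin configurations `Σ = {0,1}^N`. -/
abbrev Config (N : ℕ) := Fin N → Bool

/-- `𝓐(σ) = {i : σ_i = 1}`. -/
def ASet {N : ℕ} (σ : Config N) : Finset (Fin N) := Finset.univ.filter fun i => σ i = true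

/-- `M(σ) = ∑ σ_i`. -/
def Msum {N : ℕ} (σ : Config N) : ℕ := (ASet σ).card

/-- Magnetization `m(σ) = M(σ)/N`. -/
def mConf {N : ℕ} (σ : Config N) : ℝ := (Msum σ : ℝ) / N

/-- `D(σ)`: the number of dimer configurations `D` with `𝓜(D) = 𝓐(σ)`. -/
def Dcount (N : ℕ) (σ : Config N) : ℕ :=
  (Finset.univ.filter fun D : Dimer N => monomers D = ASet σ).card

/-- The weight `D(σ) exp(-H(σ))` of the weighted Curie–Weiss model. -/
def wConf (N : ℕ) (J h : ℝ) (σ : Config N) : ℝ :=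
  (Dcount N σ : ℝ) * Real.exp (N * (J * mConf σ ^ 2 + bIMD N J h * mConf σ))

/-- The probability of an event `A` under the weighted Curie–Weiss Gibbs measure. -/
def probConf (N : ℕ) (J h : ℝ) (A : Config N → Prop) : ℝ :=
  (∑ σ : Config N, Set.indicator {σ | A σ} (wConf N J h) σ) / ∑ σ : Config N, wConf N J h σ

/-- Expectation under the weighted Curie–Weiss Gibbs measure. -/
def EConf (N : ℕ) (J h : ℝ) (f : Config N → ℝ) : ℝ :=
  (∑ σ : Config N, wConf N J h σ * f σ) / ∑ σ : Config N, wConf N J h σ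

/-- `L₁(m) = 2(1-m)(m² - (1-m)e^{2τ(m)})/((1-m) + e^{2τ(m)})`. -/
def Lone (J h m : ℝ) : ℝ :=
  2*(1-m)*(m^2 - (1-m)*Real.exp (2 * tauFun J h m)) / ((1-m) + Real.exp (2 * tauFun J h m))

/-- `L₂(m) = 4(1-m)(m² + (1-m)e^{2τ(m)})/((1-m) + e^{2τ(m)})`. -/
def Ltwo (J h m : ℝ) : ℝ :=
  4*(1-m)*(m^2 + (1-m)*Real.exp (2 * tauFun J h m)) / ((1-m) + Real.exp (2 * tauFun J h m))

/-- The configuration obtained from `σ` by setting the spins at `u, v` to `s, t`. -/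
def upd {N : ℕ} (σ : Config N) (u v : Fin N) (s t : Bool) : Config N :=
  fun i => if i = u then s else if i = v then t else σ i

/-- The edges of the complete graph, enumerated as ordered pairs `u < v`. -/
def cEdges (N : ℕ) : Finset (Fin N × Fin N) := Finset.univ.filter fun p => p.1 < p.2

/-- The probability of resampling the pair of spins at `(u,v)` to `(s,t)`:
the conditional distribution of `(σ_u, σ_v)` given `(σ_i)_{i ≠ u,v}`. -/
def qCond (N : ℕ) (J h : ℝ) (σ : Config N) (u v : Fin N) (s t : Bool) : ℝ :=
  wConf N J h (upd σ u v s t) / ∑ st : Bool × Bool, wConf N J h (upd σ u v st.1 st.2)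

/-- `E[F(σ, σ') | σ]` for the exchangeable pair `(σ, σ')` obtained by resampling the
spins at a uniformly chosen edge. -/
def condE2 (N : ℕ) (J h : ℝ) (F : Config N → Config N → ℝ) (σ : Config N) : ℝ :=
  ((cEdges N).card : ℝ)⁻¹ * ∑ p ∈ cEdges N, ∑ st : Bool × Bool,
    qCond N J h σ p.1 p.2 st.1 st.2 * F σ (upd σ p.1 p.2 st.1 st.2)

/-- The weight of the Gibbs measure conditioned on the event `S`. -/
def wCond (N : ℕ) (J h : ℝ) (S : Config N → Prop) (σ : Config N) : ℝ :=
  Set.indicator {σ | S σ} (wConf N J h) σ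

/-- `ℙ_ℓ(A) = ℙ(A | S)`, probability under the conditioned Gibbs measure. -/
def probL (N : ℕ) (J h : ℝ) (S A : Config N → Prop) : ℝ :=
  (∑ σ : Config N, Set.indicator {σ | A σ} (wCond N J h S) σ) / ∑ σ : Config N, wCond N J h S σ

/-- Expectation under the conditioned Gibbs measure `ℙ(·|S)`. -/
def EL (N : ℕ) (J h : ℝ) (S : Config N → Prop) (f : Config N → ℝ) : ℝ :=
  (∑ σ : Config N, wCond N J h S σ * f σ) / ∑ σ : Config N, wCond N J h S σ

/-- Resampling probability for the conditioned measure `ℙ(·|S)`. -/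
def qCondL (N : ℕ) (J h : ℝ) (S : Config N → Prop) (σ : Config N) (u v : Fin N)
    (s t : Bool) : ℝ :=
  wCond N J h S (upd σ u v s t) / ∑ st : Bool × Bool, wCond N J h S (upd σ u v st.1 st.2)

/-- `E_ℓ[F(σ, σ') | σ]` for the exchangeable pair under the conditioned measure. -/
def condE2L (N : ℕ) (J h : ℝ) (S : Config N → Prop) (F : Config N → Config N → ℝ)
    (σ : Config N) : ℝ :=
  ((cEdges N).card : ℝ)⁻¹ * ∑ p ∈ cEdges N, ∑ st : Bool × Bool,
    qCondL N J h S σ p.1 p.2 st.1 st.2 * F σ (upd σ p.1 p.2 st.1 st.2)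

/-- The maximizer set `O` of `𝑝̃` on `[0,1]`. -/
def maxSet (J h : ℝ) : Set ℝ :=
  {x | x ∈ Set.Icc (0:ℝ) 1 ∧ ∀ y ∈ Set.Icc (0:ℝ) 1, ptilde J h y ≤ ptilde J h x}

end

/-- `n ≤ N / 2` dimers carry `N! / ((N - 2n)! 2ⁿ n!)` dimer configurations; this is their total
Gibbs weight. -/
noncomputable def dimerWeight (N : ℕ) (J h : ℝ) (n : ℕ) : ℝ :=
  (N.factorial : ℝ) / ((N - 2 * n).factorial * 2 ^ n * n.factorial) *
    Real.exp (N * (J * (((N - 2 * n : ℕ) : ℝ) / N) ^ 2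
      + bIMD N J h * (((N - 2 * n : ℕ) : ℝ) / N)))

/-- Dimer configurations as permutations squaring to one. -/
def dimerEquivPerm (N : ℕ) : Dimer N ≃ {g : Equiv.Perm (Fin N) // g ^ 2 = 1} where
  toFun D := ⟨⟨D.1, D.1, D.2, D.2⟩, by ext i; simp [pow_two, D.2 i]⟩
  invFun g := ⟨g.1, fun i => by
    have := congrArg (fun f : Equiv.Perm (Fin N) => f i) g.2
    simpa [pow_two] using this⟩
  left_inv _ := rfl
  right_inv _ := by ext; rfl

theorem card_monomers_add_card_support {N : ℕ} (D : Dimer N) :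
    (monomers D).card + (dimerEquivPerm N D).1.support.card = N := by
  have h : (monomers D) = ((dimerEquivPerm N D).1.support)ᶜ := by
    ext i
    simp [monomers, dimerEquivPerm]
  rw [h, Finset.card_compl_add_card, Fintype.card_fin]

/-- The number of dimers of a configuration. -/
noncomputable def dimerCard {N : ℕ} (D : Dimer N) : ℕ := (dimerEquivPerm N D).1.cycleType.card

theorem cycleType_dimerEquivPerm {N : ℕ} (D : Dimer N) :
    (dimerEquivPerm N D).1.cycleType = Multiset.replicate (dimerCard D) 2 :=
  have : Fact (Nat.Prime 2) := ⟨Nat.prime_two⟩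
  Equiv.Perm.cycleType_of_pow_prime_eq_one (dimerEquivPerm N D).2

theorem card_monomers_add_two_mul_dimerCard {N : ℕ} (D : Dimer N) :
    (monomers D).card + 2 * dimerCard D = N := by
  have h := card_monomers_add_card_support D
  rw [← Equiv.Perm.sum_cycleType, cycleType_dimerEquivPerm, Multiset.sum_replicate] at h
  simpa [mul_comm] using h

theorem card_filter_dimerCard_eq (N n : ℕ) :
    (Finset.univ.filter fun D : Dimer N => dimerCard D = n).card =
      (Finset.univ.filter fun g : Equiv.Perm (Fin N) =>
        g.cycleType = Multiset.replicate n 2).card := by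
  have : Fact (Nat.Prime 2) := ⟨Nat.prime_two⟩
  refine Finset.card_bij (fun D _ => (dimerEquivPerm N D).1) ?_ ?_ ?_
  · intro D hD
    simp only [Finset.mem_filter, Finset.mem_univ, true_and] at hD ⊢
    rw [cycleType_dimerEquivPerm, hD]
  · intro D _ D' _ hDD
    exact (dimerEquivPerm N).injective (Subtype.ext hDD)
  · intro g hg
    simp only [Finset.mem_filter, Finset.mem_univ, true_and] at hg
    have hg2 : g ^ 2 = 1 := by
      rw [Equiv.Perm.pow_prime_eq_one_iff, hg]
      exact fun c hc => Multiset.eq_of_mem_replicate hc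
    refine ⟨(dimerEquivPerm N).symm ⟨g, hg2⟩, ?_, by simp⟩
    rw [Finset.mem_filter]
    exact ⟨Finset.mem_univ _, by simp [dimerCard, hg]⟩

theorem card_filter_dimerCard (N n : ℕ) (hn : 2 * n ≤ N) :
    ((Finset.univ.filter fun D : Dimer N => dimerCard D = n).card : ℝ) =
      (N.factorial : ℝ) / ((N - 2 * n).factorial * 2 ^ n * n.factorial) := by
  rw [eq_div_iff (by positivity), card_filter_dimerCard_eq]
  have h := Equiv.Perm.card_of_cycleType_mul_eq (Fin N) (Multiset.replicate n 2)
  rw [if_pos (by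
    refine ⟨by simpa [mul_comm] using hn, fun a ha => ?_⟩
    rw [Multiset.eq_of_mem_replicate ha])] at h
  have hprod : ∏ k ∈ (Multiset.replicate n 2).toFinset,
      ((Multiset.replicate n 2).count k).factorial = n.factorial := by
    rcases Nat.eq_zero_or_pos n with rfl | hpos
    · simp
    · rw [Multiset.toFinset_replicate, if_neg hpos.ne']
      simp
  rw [hprod] at h
  simp only [Fintype.card_fin, Multiset.sum_replicate, Multiset.prod_replicate, smul_eq_mul,
    mul_comm n 2] at h
  exact_mod_cast h

theorem sum_wConf_mul_eq (N : ℕ) (J h : ℝ) (f : ℕ → ℝ) :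
    ∑ σ : Config N, wConf N J h σ * f (Msum σ) =
      ∑ n ∈ Finset.range (N / 2 + 1), dimerWeight N J h n * f (N - 2 * n) := by
  set G : ℕ → ℝ := fun j =>
    Real.exp (N * (J * ((j : ℝ) / N) ^ 2 + bIMD N J h * ((j : ℝ) / N))) * f j with hG
  have hconf : ∑ σ : Config N, wConf N J h σ * f (Msum σ)
      = ∑ D : Dimer N, G (monomers D).card := by
    let a : Dimer N → Config N := fun D i => decide (D.1 i = i)
    have ha : ∀ D σ, monomers D = ASet σ ↔ a D = σ := by
      intro D σ
      simp only [Finset.ext_iff, funext_iff, monomers, ASet, a, Finset.mem_filter,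
        Finset.mem_univ, true_and]
      refine forall_congr' fun i => ?_
      cases hσ : σ i <;> simp
    rw [← Finset.sum_fiberwise_of_maps_to (s := Finset.univ) (t := Finset.univ) (g := a)
      (fun _ _ => Finset.mem_univ _)]
    refine Finset.sum_congr rfl fun σ _ => ?_
    have hconst : ∀ D ∈ Finset.univ.filter (fun D => a D = σ),
        G (monomers D).card = G (Msum σ) := by
      intro D hD
      rw [(ha D σ).2 (by simpa using hD), Msum]
    rw [Finset.sum_congr rfl hconst, Finset.sum_const, nsmul_eq_mul, wConf, Dcount]
    simp only [ha, hG, mConf]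
    ring
  rw [hconf, ← Finset.sum_fiberwise_of_maps_to (s := Finset.univ)
    (t := Finset.range (N / 2 + 1)) (g := fun D : Dimer N => dimerCard D)
    (fun D _ => by
      have := card_monomers_add_two_mul_dimerCard D
      rw [Finset.mem_range]; omega)]
  refine Finset.sum_congr rfl fun n hn => ?_
  have hn' : 2 * n ≤ N := by rw [Finset.mem_range] at hn; omega
  have hconst : ∀ D ∈ Finset.univ.filter (fun D : Dimer N => dimerCard D = n),
      G (monomers D).card = G (N - 2 * n) := by
    intro D hD
    have h1 := card_monomers_add_two_mul_dimerCard D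
    have h2 : dimerCard D = n := by simpa using hD
    rw [show (monomers D).card = N - 2 * n by omega]
  rw [Finset.sum_congr rfl hconst, Finset.sum_const, nsmul_eq_mul,
    card_filter_dimerCard N n hn', dimerWeight]
  simp only [hG]
  ring

/-- The monomer density of a configuration with `n` dimers. -/
noncomputable def monomerDensity (N n : ℕ) : ℝ := ((N - 2 * n : ℕ) : ℝ) / N

/-- The factor of `Lone` whose sign decides whether the Gibbs weight increases or decreases. -/
noncomputable def criticalFactor (J h m : ℝ) : ℝ :=
  m ^ 2 - (1 - m) * Real.exp (2 * tauFun J h m)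

theorem dimerWeight_pos (N : ℕ) (J h : ℝ) (n : ℕ) : 0 < dimerWeight N J h n := by
  unfold dimerWeight
  positivity

theorem monomerDensity_mem_Icc (N n : ℕ) : monomerDensity N n ∈ Set.Icc (0 : ℝ) 1 := by
  unfold monomerDensity
  refine ⟨by positivity, div_le_one_of_le₀ ?_ (by positivity)⟩
  exact_mod_cast Nat.sub_le _ _

theorem natCast_mul_monomerDensity {N n : ℕ} (hN : 1 ≤ N) (hn : 2 * n ≤ N) :
    (N : ℝ) * monomerDensity N n = N - 2 * n := by
  have : (N : ℝ) ≠ 0 := by positivity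
  rw [monomerDensity, mul_div_cancel₀ _ this, Nat.cast_sub hn]
  push_cast
  ring

theorem dimerWeight_succ {N n : ℕ} (J h : ℝ) (hn : 2 * (n + 1) ≤ N) :
    dimerWeight N J h (n + 1) * (2 * (n + 1) * N *
        Real.exp (2 * tauFun J h (monomerDensity N (n + 1) + 1 / N))) =
      dimerWeight N J h n * ((N * monomerDensity N n) * (N * monomerDensity N n - 1)) := by
  obtain ⟨i, rfl⟩ := Nat.exists_eq_add_of_le hn
  have h1 : 2 * (n + 1) + i - 2 * (n + 1) = i := by omega
  have h2 : 2 * (n + 1) + i - 2 * n = i + 2 := by omega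
  unfold dimerWeight monomerDensity
  rw [h1, h2]
  have hM : (0 : ℝ) < ((2 * (n + 1) + i : ℕ) : ℝ) := by positivity
  have hexpo : ∀ M : ℝ, 0 < M →
      Real.exp (M * (J * ((i : ℝ) / M) ^ 2 + (Real.log M / 2 + h - J) * ((i : ℝ) / M))) *
        (M * Real.exp (2 * tauFun J h ((i : ℝ) / M + 1 / M))) =
      Real.exp (M * (J * (((i + 2 : ℕ) : ℝ) / M) ^ 2 +
        (Real.log M / 2 + h - J) * (((i + 2 : ℕ) : ℝ) / M))) := by
    intro M hM
    have hMexp : M * Real.exp (2 * tauFun J h ((i : ℝ) / M + 1 / M)) =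
        Real.exp (Real.log M + 2 * tauFun J h ((i : ℝ) / M + 1 / M)) := by
      rw [Real.exp_add, Real.exp_log hM]
    rw [hMexp, ← Real.exp_add]
    congr 1
    unfold tauFun
    push_cast
    field_simp
    ring
  unfold bIMD
  rw [← hexpo _ hM, Nat.factorial_succ (i + 1), Nat.factorial_succ i, Nat.factorial_succ n]
  have hi := Nat.factorial_pos i
  generalize Real.exp _ = e1
  generalize Real.exp _ = e2
  generalize ((2 * (n + 1) + i : ℕ) : ℝ) = M at *
  push_cast
  field_simp
  ring

theorem sum_dimerWeight_exchange {N : ℕ} (hN : 1 ≤ N) (J h m₀ : ℝ) :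
    ∑ n ∈ Finset.range (N / 2 + 1), dimerWeight N J h n *
      ((monomerDensity N n * (monomerDensity N n - 1 / N)) *
        (monomerDensity N n - 2 / N - m₀)) =
    ∑ n ∈ Finset.range (N / 2 + 1), dimerWeight N J h n *
      ((1 - monomerDensity N n) * Real.exp (2 * tauFun J h (monomerDensity N n + 1 / N)) *
        (monomerDensity N n - m₀)) := by
  have hN0 : (0 : ℝ) < N := by positivity
  rw [Finset.sum_range_succ, Finset.sum_range_succ']
  have hlast : monomerDensity N (N / 2) * (monomerDensity N (N / 2) - 1 / N) = 0 := by
    unfold monomerDensity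
    rcases Nat.mod_two_eq_zero_or_one N with h0 | h0
    · rw [show N - 2 * (N / 2) = 0 by omega]; simp
    · rw [show N - 2 * (N / 2) = 1 by omega]; simp
  have hfirst : monomerDensity N 0 = 1 := by
    simp [monomerDensity, hN0.ne']
  rw [hlast, hfirst]
  simp only [zero_mul, mul_zero, sub_self, add_zero]
  refine Finset.sum_congr rfl fun n hn => ?_
  have hn2 : 2 * (n + 1) ≤ N := by rw [Finset.mem_range] at hn; omega
  have hrec := dimerWeight_succ J h hn2
  have ha := natCast_mul_monomerDensity hN hn2
  have hb := natCast_mul_monomerDensity (n := n) hN (by omega)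
  have hm : monomerDensity N (n + 1) = monomerDensity N n - 2 / N := by
    field_simp
    push_cast at ha
    linarith
  have hn1 : 2 * ((n : ℝ) + 1) = N * (1 - monomerDensity N (n + 1)) := by
    push_cast at ha
    linarith
  rw [hn1] at hrec
  rw [← hm]
  have hq : dimerWeight N J h n * (monomerDensity N n * (monomerDensity N n - 1 / N)) =
      dimerWeight N J h (n + 1) * ((1 - monomerDensity N (n + 1)) *
        Real.exp (2 * tauFun J h (monomerDensity N (n + 1) + 1 / N))) := by
    apply mul_left_cancel₀ (pow_ne_zero 2 hN0.ne')
    have : (N : ℝ) ^ 2 * (dimerWeight N J h n *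
        (monomerDensity N n * (monomerDensity N n - 1 / N))) =
        dimerWeight N J h n * ((N * monomerDensity N n) * (N * monomerDensity N n - 1)) := by
      field_simp
    rw [this, ← hrec]
    ring
  rw [← mul_assoc, hq]
  ring

theorem tauFun_le {J : ℝ} (hJ : 0 ≤ J) (h : ℝ) {m : ℝ} (hm : m ≤ 1) :
    tauFun J h m ≤ J + h := by
  unfold tauFun
  nlinarith

theorem exp_sub_one_le_mul_exp (t : ℝ) : Real.exp t - 1 ≤ t * Real.exp t := by
  have h := Real.add_one_le_exp (-t)
  have h2 : Real.exp t * Real.exp (-t) = 1 := by rw [← Real.exp_add]; simp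
  nlinarith [Real.exp_pos t]

theorem sum_dimerWeight_criticalFactor_le {J : ℝ} (hJ : 0 ≤ J) (h : ℝ) {m₀ : ℝ}
    (hm₀ : m₀ ∈ Set.Icc (0 : ℝ) 1) {N : ℕ} (hN : 1 ≤ N) :
    ∑ n ∈ Finset.range (N / 2 + 1), dimerWeight N J h n *
      (criticalFactor J h (monomerDensity N n) * (monomerDensity N n - m₀)) ≤
    (3 + 4 * J * Real.exp (4 * J) * Real.exp (2 * (J + h))) / N *
      ∑ n ∈ Finset.range (N / 2 + 1), dimerWeight N J h n := by
  have hN0 : (1 : ℝ) ≤ N := by exact_mod_cast hN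
  have hpt : ∀ n, dimerWeight N J h n *
      (criticalFactor J h (monomerDensity N n) * (monomerDensity N n - m₀)) ≤
      (3 + 4 * J * Real.exp (4 * J) * Real.exp (2 * (J + h))) / N * dimerWeight N J h n +
      (dimerWeight N J h n * ((monomerDensity N n * (monomerDensity N n - 1 / N)) *
        (monomerDensity N n - 2 / N - m₀)) -
      dimerWeight N J h n * ((1 - monomerDensity N n) *
        Real.exp (2 * tauFun J h (monomerDensity N n + 1 / N)) *
        (monomerDensity N n - m₀))) := by
    intro n
    have hw := dimerWeight_pos N J h n
    have hm := monomerDensity_mem_Icc N n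
    generalize dimerWeight N J h n = w at *
    generalize monomerDensity N n = m at *
    obtain ⟨hm0, hm1⟩ := hm
    obtain ⟨h00, h01⟩ := hm₀
    have hexp : Real.exp (2 * tauFun J h (m + 1 / N)) =
        Real.exp (2 * tauFun J h m) * Real.exp (4 * J / N) := by
      rw [← Real.exp_add]
      congr 1
      unfold tauFun
      ring
    rw [hexp]
    set e := Real.exp (2 * tauFun J h m) with he
    have hele : e ≤ Real.exp (2 * (J + h)) :=
      Real.exp_le_exp.2 (by linarith [tauFun_le hJ h hm1])
    have hepos : 0 < e := Real.exp_pos _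
    set d := Real.exp (4 * J / N) - 1 with hd
    have hd0 : 0 ≤ d := by
      have : (1 : ℝ) ≤ Real.exp (4 * J / N) := Real.one_le_exp (by positivity)
      linarith
    have hd1 : d ≤ 4 * J * Real.exp (4 * J) / N := by
      refine (exp_sub_one_le_mul_exp _).trans ?_
      have : Real.exp (4 * J / N) ≤ Real.exp (4 * J) :=
        Real.exp_le_exp.2 (div_le_self (by positivity) hN0)
      calc 4 * J / N * Real.exp (4 * J / N) ≤ 4 * J / N * Real.exp (4 * J) := by gcongr
        _ = _ := by ring
    have hed : Real.exp (4 * J / N) = d + 1 := by rw [hd]; ring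
    have hterm : (1 - m) * e * d * (m - m₀) ≤
        4 * J * Real.exp (4 * J) / N * Real.exp (2 * (J + h)) := by
      calc (1 - m) * e * d * (m - m₀) ≤ 1 * Real.exp (2 * (J + h)) *
            (4 * J * Real.exp (4 * J) / N) * 1 := by
            have : 0 ≤ (1 - m) * e * d :=
              mul_nonneg (mul_nonneg (by linarith) hepos.le) hd0
            calc (1 - m) * e * d * (m - m₀) ≤ (1 - m) * e * d * 1 := by
                  apply mul_le_mul_of_nonneg_left _ this
                  linarith
              _ ≤ _ := by
                  gcongr
                  linarith
        _ = _ := by ring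
    have hinv : 0 < 1 / (N : ℝ) := by positivity
    have h2 : criticalFactor J h m * (m - m₀) ≤
        (3 + 4 * J * Real.exp (4 * J) * Real.exp (2 * (J + h))) / N +
        (m * (m - 1 / N) * (m - 2 / N - m₀) - (1 - m) * (e * (d + 1)) * (m - m₀)) := by
      unfold criticalFactor
      rw [← he]
      have hpoly : m ^ 2 * (2 / N) + m * (1 / N) * (m - 2 / N - m₀) ≤ 3 / (N : ℝ) := by
        set r := 1 / (N : ℝ) with hr
        rw [show 2 / (N : ℝ) = 2 * r by rw [hr]; ring, show 3 / (N : ℝ) = 3 * r by rw [hr]; ring]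
        have : m ^ 2 * 2 + m * (m - 2 * r - m₀) ≤ 3 := by nlinarith
        nlinarith
      have : (3 + 4 * J * Real.exp (4 * J) * Real.exp (2 * (J + h))) / N =
        3 / (N : ℝ) + 4 * J * Real.exp (4 * J) / N * Real.exp (2 * (J + h)) := by ring
      rw [this]
      nlinarith
    rw [hed]
    have := mul_le_mul_of_nonneg_left h2 hw.le
    linarith
  refine (Finset.sum_le_sum fun n _ => hpt n).trans ?_
  rw [Finset.sum_add_distrib, Finset.sum_sub_distrib, sum_dimerWeight_exchange hN, sub_self,
    add_zero, Finset.mul_sum]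

/-- The exponential growth rate of the Gibbs weight at monomer density `m`. -/
noncomputable def freeEnergy (J h m : ℝ) : ℝ :=
  J * m ^ 2 + (h - J) * m + Real.negMulLog m + Real.negMulLog (1 - m) / 2 + (m - 1) / 2

theorem continuous_freeEnergy (J h : ℝ) : Continuous (freeEnergy J h) := by
  unfold freeEnergy
  fun_prop

theorem gFun_pos (x : ℝ) : 0 < gFun x := by
  unfold gFun
  have h : Real.exp (2 * x) < Real.sqrt (Real.exp (4 * x) + 4 * Real.exp (2 * x)) := by
    apply Real.lt_sqrt_of_sq_lt
    rw [← Real.exp_nat_mul]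
    have : Real.exp ((2 : ℕ) * (2 * x)) = Real.exp (4 * x) := by congr 1; push_cast; ring
    linarith [Real.exp_pos (2 * x)]
  linarith

theorem gFun_sq (x : ℝ) : gFun x ^ 2 = (1 - gFun x) * Real.exp (2 * x) := by
  have h4 : Real.exp (4 * x) = Real.exp (2 * x) ^ 2 := by
    rw [← Real.exp_nat_mul]; congr 1; push_cast; ring
  have hs : Real.sqrt (Real.exp (4 * x) + 4 * Real.exp (2 * x)) ^ 2 =
      Real.exp (4 * x) + 4 * Real.exp (2 * x) := Real.sq_sqrt (by positivity)
  unfold gFun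
  rw [h4] at *
  nlinarith

theorem gFun_lt_one (x : ℝ) : gFun x < 1 := by
  have h := gFun_sq x
  have hp := pow_pos (gFun_pos x) 2
  rw [h] at hp
  linarith [pos_of_mul_pos_left hp (Real.exp_pos _).le]

theorem eq_gFun_of_sq_eq {x m : ℝ} (hm : 0 ≤ m) (h : m ^ 2 = (1 - m) * Real.exp (2 * x)) :
    m = gFun x := by
  have hg := gFun_sq x
  have hp := gFun_pos x
  have hz : (m - gFun x) * (m + gFun x + Real.exp (2 * x)) = 0 := by linear_combination h - hg
  rcases mul_eq_zero.1 hz with h0 | h0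
  · linarith
  · linarith [Real.exp_pos (2 * x)]

theorem eq_log_gFun (x : ℝ) : x = Real.log (gFun x) - Real.log (1 - gFun x) / 2 := by
  have h := congrArg Real.log (gFun_sq x)
  rw [Real.log_mul (by linarith [gFun_lt_one x]) (Real.exp_pos _).ne', Real.log_exp,
    Real.log_pow] at h
  push_cast at h
  linarith

theorem mul_log_add_negMulLog_le {m g : ℝ} (hm : 0 ≤ m) (hg : 0 < g) :
    m * Real.log g + Real.negMulLog m ≤ g - m := by
  rcases hm.eq_or_lt with rfl | hm
  · simpa using hg.le
  · have h := Real.log_le_sub_one_of_pos (div_pos hg hm)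
    rw [Real.log_div hg.ne' hm.ne'] at h
    have h2 := mul_le_mul_of_nonneg_left h hm.le
    have h3 : m * (g / m - 1) = g - m := by field_simp
    unfold Real.negMulLog
    linarith

theorem freeEnergy_le_ptilde (J h : ℝ) {m : ℝ} (hm : m ∈ Set.Icc (0 : ℝ) 1) :
    freeEnergy J h m ≤ ptilde J h m := by
  unfold freeEnergy ptilde
  have hτ := eq_log_gFun (tauFun J h m)
  have hτ' : tauFun J h m = (2 * m - 1) * J + h := rfl
  have h1 := mul_log_add_negMulLog_le hm.1 (gFun_pos (tauFun J h m))
  have h2 := mul_log_add_negMulLog_le (sub_nonneg.2 hm.2)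
    (sub_pos.2 (gFun_lt_one (tauFun J h m)))
  have h3 : m * tauFun J h m = m * (Real.log (gFun (tauFun J h m)) -
    Real.log (1 - gFun (tauFun J h m)) / 2) := congrArg (m * ·) hτ
  have h4 : m * tauFun J h m = m * ((2 * m - 1) * J + h) := congrArg (m * ·) hτ'
  nlinarith

theorem freeEnergy_eq_ptilde (J h : ℝ) {m : ℝ} (hm : m = gFun (tauFun J h m)) :
    freeEnergy J h m = ptilde J h m := by
  unfold freeEnergy ptilde Real.negMulLog
  have hτ := eq_log_gFun (tauFun J h m)
  rw [← hm] at hτ ⊢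
  have h3 : m * tauFun J h m = m * (Real.log m - Real.log (1 - m) / 2) := congrArg (m * ·) hτ
  have h4 : m * tauFun J h m = m * ((2 * m - 1) * J + h) := rfl
  nlinarith

theorem le_log_factorial (n : ℕ) :
    (n : ℝ) * Real.log n - n ≤ Real.log n.factorial := by
  induction n with
  | zero => simp
  | succ n ih =>
    rw [Nat.factorial_succ, Nat.cast_mul, Real.log_mul (by positivity) (by positivity)]
    rcases Nat.eq_zero_or_pos n with rfl | hn
    · simp
    have hn' : (0 : ℝ) < n := by exact_mod_cast hn
    have h := Real.log_le_sub_one_of_pos (show (0 : ℝ) < ((n + 1 : ℕ) : ℝ) / n by positivity)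
    rw [Real.log_div (by positivity) (by positivity)] at h
    have h2 := mul_le_mul_of_nonneg_left h hn'.le
    have h3 : (n : ℝ) * (((n + 1 : ℕ) : ℝ) / n - 1) = 1 := by push_cast; field_simp; ring
    push_cast at *
    nlinarith

theorem log_factorial_le (n : ℕ) :
    Real.log n.factorial ≤ (n : ℝ) * Real.log n - n + 1 + 2 * Real.log (n + 1) := by
  induction n with
  | zero => simp
  | succ n ih =>
    rw [Nat.factorial_succ, Nat.cast_mul, Real.log_mul (by positivity) (by positivity)]
    have h1 : (n : ℝ) * Real.log n + n / (n + 1) ≤ n * Real.log (n + 1) := by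
      rcases Nat.eq_zero_or_pos n with rfl | hn
      · simp
      have hn' : (0 : ℝ) < n := by exact_mod_cast hn
      have h := Real.log_le_sub_one_of_pos (show (0 : ℝ) < n / ((n : ℝ) + 1) by positivity)
      rw [Real.log_div (by positivity) (by positivity)] at h
      have h2 := mul_le_mul_of_nonneg_left h hn'.le
      have h3 : (n : ℝ) * (n / ((n : ℝ) + 1) - 1) = - (n / (n + 1)) := by field_simp; ring
      linarith
    have h2 : Real.log (n + 1) + 1 / (n + 2) ≤ Real.log ((n : ℝ) + 1 + 1) := by
      have h := Real.log_le_sub_one_of_pos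
        (show (0 : ℝ) < ((n : ℝ) + 1) / ((n : ℝ) + 1 + 1) by positivity)
      rw [Real.log_div (by positivity) (by positivity)] at h
      have h3 : ((n : ℝ) + 1) / ((n : ℝ) + 1 + 1) - 1 = - (1 / (n + 2)) := by
        field_simp; ring
      linarith
    have h3 : (1 : ℝ) ≤ n / (n + 1) + 2 * (1 / (n + 2)) := by
      have hn' : (0 : ℝ) ≤ n := by positivity
      field_simp
      nlinarith
    push_cast
    nlinarith

/-- The remainder in the leading-order Stirling approximation of `log n!`. -/
noncomputable def stirlingRemainder (n : ℕ) : ℝ :=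
  Real.log n.factorial - ((n : ℝ) * Real.log n - n)

theorem stirlingRemainder_nonneg (n : ℕ) : 0 ≤ stirlingRemainder n := by
  unfold stirlingRemainder
  linarith [le_log_factorial n]

theorem stirlingRemainder_le {n N : ℕ} (hn : n ≤ N) :
    stirlingRemainder n ≤ 1 + 2 * Real.log (N + 1) := by
  unfold stirlingRemainder
  have : Real.log ((n : ℝ) + 1) ≤ Real.log (N + 1) :=
    Real.log_le_log (by positivity) (by gcongr)
  linarith [log_factorial_le n]

theorem log_dimerWeight {N n : ℕ} (J h : ℝ) (hN : 1 ≤ N) (hn : 2 * n ≤ N) :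
    Real.log (dimerWeight N J h n) =
      (Real.log N.factorial - N * Real.log N / 2 + N) +
        N * freeEnergy J h (monomerDensity N n) -
        stirlingRemainder (N - 2 * n) - stirlingRemainder n := by
  have hN0 : (0 : ℝ) < N := by positivity
  unfold dimerWeight stirlingRemainder
  rw [Real.log_mul (by positivity) (Real.exp_pos _).ne', Real.log_exp,
    Real.log_div (by positivity) (by positivity), Real.log_mul (by positivity) (by positivity),
    Real.log_mul (by positivity) (by positivity), Real.log_pow]
  change _ + (N * (J * monomerDensity N n ^ 2 + bIMD N J h * monomerDensity N n)) = _
  have hm := natCast_mul_monomerDensity hN hn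
  have hj : ((N - 2 * n : ℕ) : ℝ) = N * monomerDensity N n := by
    rw [monomerDensity]; field_simp
  have h2n : (2 : ℝ) * n = N * (1 - monomerDensity N n) := by linarith
  have hlog1 : ((N - 2 * n : ℕ) : ℝ) * Real.log ((N - 2 * n : ℕ) : ℝ) =
      N * monomerDensity N n * Real.log N - N * Real.negMulLog (monomerDensity N n) := by
    have := Real.negMulLog_mul N (monomerDensity N n)
    rw [hj]
    simp only [Real.negMulLog] at *
    linarith
  have hlog2 : (n : ℝ) * Real.log n + n * Real.log 2 =
      N * (1 - monomerDensity N n) / 2 * Real.log N -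
        N * Real.negMulLog (1 - monomerDensity N n) / 2 := by
    have h1 := Real.negMulLog_mul N (1 - monomerDensity N n)
    have h2 := Real.negMulLog_mul 2 (n : ℝ)
    rw [h2n] at h2
    simp only [Real.negMulLog] at *
    linarith
  rw [hlog1, hj]
  have hnn : (n : ℝ) = N * (1 - monomerDensity N n) / 2 := by linarith
  unfold freeEnergy bIMD
  have : (n : ℝ) * Real.log n = N * (1 - monomerDensity N n) / 2 * Real.log N -
        N * Real.negMulLog (1 - monomerDensity N n) / 2 - n * Real.log 2 := by linarith
  rw [this]
  linear_combination hnn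

theorem exists_freeEnergy_gap {J h m₀ : ℝ}
    (hF : ∀ m ∈ Set.Icc (0 : ℝ) 1, m ≠ m₀ → freeEnergy J h m < freeEnergy J h m₀)
    {δ : ℝ} (hδ : 0 < δ) :
    ∃ η > 0, ∀ m ∈ Set.Icc (0 : ℝ) 1, δ ≤ |m - m₀| →
      freeEnergy J h m ≤ freeEnergy J h m₀ - η := by
  have hK : IsCompact (Set.Icc (0 : ℝ) 1 ∩ {m | δ ≤ |m - m₀|}) :=
    isCompact_Icc.inter_right (isClosed_le continuous_const (by fun_prop))
  rcases (Set.Icc (0 : ℝ) 1 ∩ {m | δ ≤ |m - m₀|}).eq_empty_or_nonempty with he | hne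
  · exact ⟨1, one_pos, fun m hm hd => (Set.eq_empty_iff_forall_notMem.1 he m ⟨hm, hd⟩).elim⟩
  · obtain ⟨x, hx, hmax⟩ := hK.exists_isMaxOn hne (continuous_freeEnergy J h).continuousOn
    have hxm : x ≠ m₀ := by
      rintro rfl
      have : δ ≤ |x - x| := hx.2
      rw [sub_self, abs_zero] at this
      linarith
    refine ⟨freeEnergy J h m₀ - freeEnergy J h x, sub_pos.2 (hF x hx.1 hxm), ?_⟩
    intro m hm hd
    have : freeEnergy J h m ≤ freeEnergy J h x := hmax ⟨hm, hd⟩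
    linarith

theorem exists_monomerDensity_near {m₀ : ℝ} (hm₀ : m₀ ∈ Set.Icc (0 : ℝ) 1) {N : ℕ}
    (hN : 1 ≤ N) : ∃ n, 2 * n ≤ N ∧ |monomerDensity N n - m₀| ≤ 2 / N := by
  have hN0 : (0 : ℝ) < N := by positivity
  have hx0 : 0 ≤ N * (1 - m₀) / 2 := by
    have := sub_nonneg.2 hm₀.2
    positivity
  have h1 := Nat.floor_le hx0
  have h2 := Nat.lt_floor_add_one (N * (1 - m₀) / 2)
  have hle : 2 * ⌊N * (1 - m₀) / 2⌋₊ ≤ N := by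
    have : (2 : ℝ) * (⌊N * (1 - m₀) / 2⌋₊ : ℝ) ≤ N := by nlinarith [hm₀.1]
    exact_mod_cast this
  refine ⟨_, hle, ?_⟩
  have h3 := natCast_mul_monomerDensity hN hle
  rw [le_div_iff₀ hN0, ← abs_of_pos hN0, ← abs_mul, abs_of_pos hN0, abs_le]
  constructor <;> nlinarith

theorem mul_pow_mul_exp_neg_le {η : ℝ} (hη : 0 < η) (N : ℕ) :
    (N : ℝ) * ((N + 1) ^ 5 * Real.exp (-(N * η / 2))) ≤
      720 * (2 / η) ^ 6 * Real.exp (η / 2) := by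
  have h := Real.pow_div_factorial_le_exp (x := (N + 1) * η / 2) (by positivity) 6
  have h6 : ((Nat.factorial 6 : ℕ) : ℝ) = 720 := by norm_num [Nat.factorial]
  rw [h6] at h
  have h2 : ((N : ℝ) + 1) ^ 6 ≤ 720 * (2 / η) ^ 6 * Real.exp ((N + 1) * η / 2) := by
    calc ((N : ℝ) + 1) ^ 6 = 720 * (2 / η) ^ 6 * (((N + 1) * η / 2) ^ 6 / 720) := by
          field_simp
      _ ≤ _ := by gcongr
  have h3 : Real.exp ((N + 1) * η / 2) * Real.exp (-(N * η / 2)) = Real.exp (η / 2) := by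
    rw [← Real.exp_add]; congr 1; ring
  calc (N : ℝ) * ((N + 1) ^ 5 * Real.exp (-(N * η / 2)))
      ≤ (N + 1) * ((N + 1) ^ 5 * Real.exp (-(N * η / 2))) := by gcongr; linarith
    _ = (N + 1) ^ 6 * Real.exp (-(N * η / 2)) := by ring
    _ ≤ 720 * (2 / η) ^ 6 * Real.exp ((N + 1) * η / 2) * Real.exp (-(N * η / 2)) := by gcongr
    _ = _ := by rw [mul_assoc, h3]

theorem exists_sum_dimerWeight_far_le {J h m₀ : ℝ} (hm₀ : m₀ ∈ Set.Icc (0 : ℝ) 1)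
    (hF : ∀ m ∈ Set.Icc (0 : ℝ) 1, m ≠ m₀ → freeEnergy J h m < freeEnergy J h m₀)
    {δ : ℝ} (hδ : 0 < δ) :
    ∃ C : ℝ, ∀ N : ℕ, 1 ≤ N →
      ∑ n ∈ Finset.range (N / 2 + 1),
        dimerWeight N J h n * (if δ ≤ |monomerDensity N n - m₀| then 1 else 0) ≤
      C / N * ∑ n ∈ Finset.range (N / 2 + 1), dimerWeight N J h n := by
  obtain ⟨η, hη, hgap⟩ := exists_freeEnergy_gap hF hδ
  obtain ⟨ε, hε, hcont⟩ := Metric.continuousAt_iff.1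
    (continuous_freeEnergy J h).continuousAt (η / 2) (half_pos hη)
  obtain ⟨N₀, hN₀⟩ := exists_nat_gt (2 / ε)
  refine ⟨max N₀ (Real.exp 2 * (720 * (2 / η) ^ 6 * Real.exp (η / 2))), fun N hN => ?_⟩
  have hN0 : (0 : ℝ) < N := by positivity
  set Z := ∑ n ∈ Finset.range (N / 2 + 1), dimerWeight N J h n with hZ
  have hZ0 : 0 ≤ Z := Finset.sum_nonneg fun n _ => (dimerWeight_pos N J h n).le
  rcases lt_or_ge N N₀ with hlt | hge
  · have h1 : ∑ n ∈ Finset.range (N / 2 + 1),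
        dimerWeight N J h n * (if δ ≤ |monomerDensity N n - m₀| then 1 else 0) ≤ Z := by
      refine Finset.sum_le_sum fun n _ => ?_
      have := (dimerWeight_pos N J h n).le
      split_ifs <;> linarith
    have h2 : 1 ≤ max (N₀ : ℝ) (Real.exp 2 * (720 * (2 / η) ^ 6 * Real.exp (η / 2))) / N := by
      rw [le_div_iff₀ hN0, one_mul]
      exact le_max_of_le_left (by exact_mod_cast hlt.le)
    nlinarith
  · obtain ⟨n₀, hn₀, hnear⟩ := exists_monomerDensity_near hm₀ hN
    have hclose : |monomerDensity N n₀ - m₀| < ε := by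
      refine hnear.trans_lt ?_
      have : (N₀ : ℝ) ≤ N := by exact_mod_cast hge
      rw [div_lt_iff₀ hε] at hN₀
      rw [div_lt_iff₀ hN0]
      nlinarith
    have hFn₀ : freeEnergy J h m₀ - η / 2 < freeEnergy J h (monomerDensity N n₀) := by
      have h1 := hcont (x := monomerDensity N n₀) (by rwa [Real.dist_eq])
      rw [Real.dist_eq, abs_lt] at h1
      linarith
    have hZn₀ : dimerWeight N J h n₀ ≤ Z :=
      Finset.single_le_sum (f := fun n => dimerWeight N J h n)
        (fun n _ => (dimerWeight_pos N J h n).le) (Finset.mem_range.2 (by omega))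
    have hfar : ∀ n ∈ Finset.range (N / 2 + 1),
        dimerWeight N J h n * (if δ ≤ |monomerDensity N n - m₀| then 1 else 0) ≤
          Real.exp 2 * ((N + 1) ^ 4 * Real.exp (-(N * η / 2))) * Z := by
      intro n hn
      have hn2 : 2 * n ≤ N := by rw [Finset.mem_range] at hn; omega
      split_ifs with hd
      · rw [mul_one]
        refine le_trans ?_ (mul_le_mul_of_nonneg_left hZn₀ (by positivity))
        have hpow : ((N : ℝ) + 1) ^ 4 = Real.exp (4 * Real.log (N + 1)) := by
          have h1 := Real.exp_nat_mul (Real.log ((N : ℝ) + 1)) 4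
          rw [Real.exp_log (by positivity)] at h1
          exact_mod_cast h1.symm
        rw [← Real.exp_log (dimerWeight_pos N J h n), ← Real.exp_log (dimerWeight_pos N J h n₀),
          hpow, ← Real.exp_add, ← Real.exp_add, ← Real.exp_add, Real.exp_le_exp,
          log_dimerWeight J h hN hn2, log_dimerWeight J h hN hn₀]
        have h1 := stirlingRemainder_nonneg (N - 2 * n)
        have h2 := stirlingRemainder_nonneg n
        have h3 := stirlingRemainder_le (Nat.sub_le N (2 * n₀))
        have h4 := stirlingRemainder_le (n := n₀) (N := N) (by omega)
        have h5 := mul_le_mul_of_nonneg_left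
          (hgap _ (monomerDensity_mem_Icc N n) hd) hN0.le
        have h6 := mul_le_mul_of_nonneg_left hFn₀.le hN0.le
        linarith
      · rw [mul_zero]
        positivity
    refine (Finset.sum_le_sum hfar).trans ?_
    rw [Finset.sum_const, Finset.card_range, nsmul_eq_mul]
    have hcount : ((N / 2 + 1 : ℕ) : ℝ) ≤ N + 1 := by
      exact_mod_cast Nat.succ_le_succ (Nat.div_le_self N 2)
    have hpoly := mul_pow_mul_exp_neg_le hη N
    calc ((N / 2 + 1 : ℕ) : ℝ) * (Real.exp 2 * ((N + 1) ^ 4 * Real.exp (-(N * η / 2))) * Z)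
        ≤ (N + 1) * (Real.exp 2 * ((N + 1) ^ 4 * Real.exp (-(N * η / 2))) * Z) := by gcongr
      _ = Real.exp 2 * (N * ((N + 1) ^ 5 * Real.exp (-(N * η / 2)))) / N * Z := by
          field_simp
      _ ≤ Real.exp 2 * (720 * (2 / η) ^ 6 * Real.exp (η / 2)) / N * Z := by gcongr
      _ ≤ _ := by
          gcongr
          exact le_max_right _ _

theorem contDiffOn_Lone (J h : ℝ) {s : Set ℝ}
    (hs : ∀ m ∈ s, (1 - m) + Real.exp (2 * tauFun J h m) ≠ 0) (n : WithTop ℕ∞) :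
    ContDiffOn ℝ n (Lone J h) s := by
  unfold Lone tauFun at *
  refine ContDiffOn.div (ContDiff.contDiffOn (by fun_prop)) (ContDiff.contDiffOn (by fun_prop)) hs

theorem deriv_Lone_one (J h : ℝ) :
    deriv (Lone J h) 1 = -2 / Real.exp (2 * tauFun J h 1) := by
  have hr : DifferentiableAt ℝ (fun m => 2 * (m ^ 2 - (1 - m) * Real.exp (2 * tauFun J h m)) /
      ((1 - m) + Real.exp (2 * tauFun J h m))) 1 := by
    unfold tauFun
    refine DifferentiableAt.div (by fun_prop) (by fun_prop) ?_
    simp [Real.exp_ne_zero]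
  have h1 : HasDerivAt (fun m : ℝ => 1 - m) (-1) 1 := by
    simpa using (hasDerivAt_id (1 : ℝ)).const_sub 1
  have h2 := (h1.mul hr.hasDerivAt).deriv
  have heq : Lone J h = (fun m : ℝ => 1 - m) * fun m =>
      2 * (m ^ 2 - (1 - m) * Real.exp (2 * tauFun J h m)) /
      ((1 - m) + Real.exp (2 * tauFun J h m)) := by
    ext m
    simp only [Lone, Pi.mul_apply]
    ring
  rw [heq, h2]
  simp
  ring

theorem taylorWithinEval_of_iteratedDeriv_eq_zero {f : ℝ → ℝ} {s : Set ℝ} (hs : IsOpen s)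
    {x₀ : ℝ} (hx₀ : x₀ ∈ s) {p : ℕ} (h0 : ∀ l ≤ p, iteratedDeriv l f x₀ = 0) (x : ℝ) :
    taylorWithinEval f p s x₀ x = 0 := by
  induction p with
  | zero => simpa using h0 0 le_rfl
  | succ p ih =>
    rw [taylorWithinEval_succ, ih fun l hl => h0 l (hl.trans p.le_succ),
      iteratedDerivWithin_of_isOpen hs hx₀, h0 _ le_rfl]
    simp

/-- A function whose first nonzero derivative at `x₀` is positive and of odd order grows at
least like the corresponding odd power. -/
theorem exists_mul_sub_ge_pow {f : ℝ → ℝ} {s : Set ℝ} (hs : IsOpen s) (hconv : Convex ℝ s)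
    {x₀ : ℝ} (hx₀ : x₀ ∈ s) {k : ℕ} (hf : ContDiffOn ℝ (2 * k + 1 : ℕ) f s)
    (h0 : ∀ l ≤ 2 * k, iteratedDeriv l f x₀ = 0) (hpos : 0 < iteratedDeriv (2 * k + 1) f x₀) :
    ∃ c > 0, ∃ δ > 0, ∀ x, |x - x₀| < δ → c * (x - x₀) ^ (2 * k + 2) ≤ f x * (x - x₀) := by
  set c := ((((2 * k : ℕ) : ℝ) + 1) * (2 * k).factorial)⁻¹ * iteratedDeriv (2 * k + 1) f x₀
    with hc
  have hcpos : 0 < c := by positivity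
  have hT := taylor_isLittleO hconv hx₀ hf
  rw [hs.nhdsWithin_eq hx₀] at hT
  have hev := hT.def (half_pos hcpos)
  obtain ⟨δ, hδ, hball⟩ := Metric.eventually_nhds_iff.1 hev
  refine ⟨c / 2, half_pos hcpos, δ, hδ, fun x hx => ?_⟩
  have hx' := hball (y := x) (by rwa [Real.dist_eq])
  rw [taylorWithinEval_succ, taylorWithinEval_of_iteratedDeriv_eq_zero hs hx₀ h0,
    iteratedDerivWithin_of_isOpen hs hx₀, zero_add, smul_eq_mul] at hx'
  have he : (((2 * k : ℕ) + 1 : ℝ) * (2 * k).factorial)⁻¹ * (x - x₀) ^ (2 * k + 1) *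
      iteratedDeriv (2 * k + 1) f x₀ = c * (x - x₀) ^ (2 * k + 1) := by
    rw [hc]; ring
  rw [he, Real.norm_eq_abs, Real.norm_eq_abs] at hx'
  have h1 : |(f x - c * (x - x₀) ^ (2 * k + 1)) * (x - x₀)| ≤ c / 2 * (x - x₀) ^ (2 * k + 2) := by
    rw [abs_mul]
    calc |f x - c * (x - x₀) ^ (2 * k + 1)| * |x - x₀|
        ≤ c / 2 * |(x - x₀) ^ (2 * k + 1)| * |x - x₀| := by gcongr
      _ = c / 2 * |(x - x₀) ^ (2 * k + 2)| := by
          rw [mul_assoc, ← abs_mul, ← pow_succ]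
      _ = _ := by
          rw [abs_of_nonneg (Even.pow_nonneg ⟨k + 1, by ring⟩ _)]
  have h2 := (abs_le.1 h1).1
  have h3 : (f x - c * (x - x₀) ^ (2 * k + 1)) * (x - x₀) =
      f x * (x - x₀) - c * (x - x₀) ^ (2 * k + 2) := by ring
  rw [h3] at h2
  linarith

theorem ne_one_of_deriv_Lone_nonneg {J h m₀ : ℝ} (hd : 0 ≤ deriv (Lone J h) m₀) : m₀ ≠ 1 := by
  rintro rfl
  rw [deriv_Lone_one, neg_div] at hd
  have : 0 < 2 / Real.exp (2 * tauFun J h 1) := by positivity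
  linarith

theorem Lone_eq_mul_criticalFactor (J h m : ℝ) :
    Lone J h m =
      2 * (1 - m) / ((1 - m) + Real.exp (2 * tauFun J h m)) * criticalFactor J h m := by
  unfold Lone criticalFactor
  ring

theorem criticalFactor_eq_zero_of_Lone_eq_zero {J h m : ℝ} (hm : m < 1) (hL : Lone J h m = 0) :
    criticalFactor J h m = 0 := by
  rw [Lone_eq_mul_criticalFactor] at hL
  have h1 : 0 < 1 - m := sub_pos.2 hm
  exact (mul_eq_zero.1 hL).resolve_left (by positivity)

theorem Lone_mul_le_two_mul_criticalFactor_mul {J h m y : ℝ} (hm : m < 1)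
    (hL : 0 ≤ Lone J h m * y) : Lone J h m * y ≤ 2 * (criticalFactor J h m * y) := by
  have h1 : 0 < 1 - m := sub_pos.2 hm
  have he := Real.exp_pos (2 * tauFun J h m)
  rw [Lone_eq_mul_criticalFactor, mul_assoc] at *
  have hc : 0 < 2 * (1 - m) / ((1 - m) + Real.exp (2 * tauFun J h m)) := by positivity
  have hc2 : 2 * (1 - m) / ((1 - m) + Real.exp (2 * tauFun J h m)) ≤ 2 := by
    rw [div_le_iff₀ (by positivity)]
    linarith
  exact mul_le_mul_of_nonneg_right hc2 (nonneg_of_mul_nonneg_right hL hc)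

theorem neg_le_criticalFactor_mul {J : ℝ} (hJ : 0 ≤ J) (h : ℝ) {m m₀ : ℝ}
    (hm : m ∈ Set.Icc (0 : ℝ) 1) (hm₀ : m₀ ∈ Set.Icc (0 : ℝ) 1) :
    -(1 + Real.exp (2 * (J + h))) ≤ criticalFactor J h m * (m - m₀) := by
  obtain ⟨hm0, hm1⟩ := hm
  obtain ⟨h00, h01⟩ := hm₀
  have he : Real.exp (2 * tauFun J h m) ≤ Real.exp (2 * (J + h)) :=
    Real.exp_le_exp.2 (by linarith [tauFun_le hJ h hm1])
  have hp := Real.exp_pos (2 * tauFun J h m)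
  have hQ : |criticalFactor J h m| ≤ 1 + Real.exp (2 * (J + h)) := by
    unfold criticalFactor
    rw [abs_le]
    constructor <;> nlinarith
  have hx : |m - m₀| ≤ 1 := by rw [abs_le]; constructor <;> linarith
  have : |criticalFactor J h m * (m - m₀)| ≤ 1 + Real.exp (2 * (J + h)) := by
    rw [abs_mul]
    nlinarith [abs_nonneg (criticalFactor J h m), abs_nonneg (m - m₀)]
  exact (abs_le.1 this).1

theorem natCast_mul_div_rpow_pow {N : ℕ} (hN : 1 ≤ N) (k : ℕ) (y : ℝ) :
    (N * y / (N : ℝ) ^ ((2 * (k : ℝ) + 1) / (2 * (k : ℝ) + 2))) ^ (2 * k + 2) =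
      N * y ^ (2 * k + 2) := by
  have hN0 : (0 : ℝ) < N := by positivity
  have h1 : ((N : ℝ) ^ ((2 * (k : ℝ) + 1) / (2 * (k : ℝ) + 2))) ^ (2 * k + 2) =
      (N : ℝ) ^ (2 * k + 1) := by
    rw [← Real.rpow_natCast, ← Real.rpow_mul hN0.le, ← Real.rpow_natCast]
    congr 1
    push_cast
    field_simp
  rw [div_pow, h1, mul_pow]
  field_simp
  ring

theorem EConf_normalized_pow_eq {N : ℕ} (hN : 1 ≤ N) (J h m₀ : ℝ) (k : ℕ) :
    EConf N J h (fun σ => (((Msum σ : ℝ) - N * m₀) /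
        (N : ℝ) ^ ((2 * (k : ℝ) + 1) / (2 * (k : ℝ) + 2))) ^ (2 * k + 2)) =
      N * (∑ n ∈ Finset.range (N / 2 + 1), dimerWeight N J h n *
        (monomerDensity N n - m₀) ^ (2 * k + 2)) /
      ∑ n ∈ Finset.range (N / 2 + 1), dimerWeight N J h n := by
  have hN0 : (N : ℝ) ≠ 0 := by positivity
  unfold EConf
  have hden := sum_wConf_mul_eq N J h fun _ => 1
  simp only [mul_one] at hden
  rw [hden, sum_wConf_mul_eq N J h fun j => (((j : ℝ) - N * m₀) /
    (N : ℝ) ^ ((2 * (k : ℝ) + 1) / (2 * (k : ℝ) + 2))) ^ (2 * k + 2), Finset.mul_sum]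
  congr 1
  refine Finset.sum_congr rfl fun n _ => ?_
  have hj : ((N - 2 * n : ℕ) : ℝ) - N * m₀ = N * (monomerDensity N n - m₀) := by
    unfold monomerDensity
    field_simp
  rw [hj, natCast_mul_div_rpow_pow hN]
  ring

/-- Uniform moment bound: `E[W^{2k+2}] ≤ K` for all `N ≥ 1`, where
`W = (M - N m₀)/N^{(2k+1)/(2k+2)}`. -/
theorem stmt10 (J h : ℝ) (hJ : 0 ≤ J) (k : ℕ) (hk : k = 0 ∨ k = 1)
    (m₀ : ℝ) (hm₀ : m₀ ∈ Set.Icc (0:ℝ) 1)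
    (hmax : ∀ m ∈ Set.Icc (0:ℝ) 1, ptilde J h m ≤ ptilde J h m₀)
    (huniq : ∀ m ∈ Set.Icc (0:ℝ) 1, ptilde J h m = ptilde J h m₀ → m = m₀)
    (hder0 : ∀ l : ℕ, l ≤ 2*k → iteratedDeriv l (Lone J h) m₀ = 0)
    (hderpos : 0 < iteratedDeriv (2*k+1) (Lone J h) m₀) :
    ∃ K : ℝ, ∀ N : ℕ, 1 ≤ N →
      EConf N J h
          (fun σ => (((Msum σ : ℝ) - N * m₀) / (N:ℝ) ^ ((2*(k:ℝ)+1)/(2*(k:ℝ)+2)))^(2*k+2))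
        ≤ K := by
  have hd : 0 ≤ deriv (Lone J h) m₀ := by
    rcases hk with rfl | rfl
    · simpa [iteratedDeriv_one] using hderpos.le
    · have := hder0 1 (by norm_num)
      rw [iteratedDeriv_one] at this
      exact this.ge
  have hlt : m₀ < 1 := lt_of_le_of_ne hm₀.2 (ne_one_of_deriv_Lone_nonneg hd)
  have hcrit : m₀ = gFun (tauFun J h m₀) := by
    refine eq_gFun_of_sq_eq hm₀.1 (sub_eq_zero.1 ?_)
    exact criticalFactor_eq_zero_of_Lone_eq_zero hlt (by simpa using hder0 0 (Nat.zero_le _))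
  have hF : ∀ m ∈ Set.Icc (0 : ℝ) 1, m ≠ m₀ → freeEnergy J h m < freeEnergy J h m₀ := by
    intro m hm hne
    rw [freeEnergy_eq_ptilde J h hcrit]
    exact (freeEnergy_le_ptilde J h hm).trans_lt
      (lt_of_le_of_ne (hmax m hm) fun he => hne (huniq m hm he))
  obtain ⟨c, hc, δ, hδ, hloc⟩ := exists_mul_sub_ge_pow isOpen_Iio (convex_Iio 1) hlt
    (contDiffOn_Lone J h (fun m hm => by
      have : 0 < 1 - m := sub_pos.2 hm
      positivity) _) hder0 hderpos
  obtain ⟨C, hC⟩ := exists_sum_dimerWeight_far_le hm₀ hF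
    (lt_min hδ (sub_pos.2 hlt) : 0 < min δ (1 - m₀))
  set A := 3 + 4 * J * Real.exp (4 * J) * Real.exp (2 * (J + h)) with hA
  set B := 1 + 2 / c * (1 + Real.exp (2 * (J + h))) with hB
  refine ⟨2 / c * A + B * C, fun N hN => ?_⟩
  have hN0 : (0 : ℝ) < N := by positivity
  rw [EConf_normalized_pow_eq hN]
  have hZ : 0 < ∑ n ∈ Finset.range (N / 2 + 1), dimerWeight N J h n :=
    Finset.sum_pos (fun n _ => dimerWeight_pos N J h n) ⟨0, by simp⟩
  rw [div_le_iff₀ hZ]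
  have hpt : ∀ n, (monomerDensity N n - m₀) ^ (2 * k + 2) ≤
      2 / c * (criticalFactor J h (monomerDensity N n) * (monomerDensity N n - m₀)) +
      B * (if min δ (1 - m₀) ≤ |monomerDensity N n - m₀| then 1 else 0) := by
    intro n
    have hm := monomerDensity_mem_Icc N n
    generalize monomerDensity N n = m at hm ⊢
    split_ifs with hfar
    · have h1 := neg_le_criticalFactor_mul hJ h hm hm₀
      have h2 : (m - m₀) ^ (2 * k + 2) ≤ 1 := by
        rw [← Even.pow_abs ⟨k + 1, by ring⟩]
        refine pow_le_one₀ (abs_nonneg _) (abs_le.2 ?_)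
        constructor <;> linarith [hm.1, hm.2, hm₀.1, hm₀.2]
      have h3 := mul_le_mul_of_nonneg_left h1 (show 0 ≤ 2 / c by positivity)
      rw [hB]
      linarith
    · have hnear := lt_min_iff.1 (not_le.1 hfar)
      have h1 := hloc m hnear.1
      have hpow : 0 ≤ c * (m - m₀) ^ (2 * k + 2) :=
        mul_nonneg hc.le (Even.pow_nonneg ⟨k + 1, by ring⟩ _)
      have h2 := Lone_mul_le_two_mul_criticalFactor_mul (J := J) (h := h)
        (by linarith [(abs_lt.1 hnear.2).2]) (hpow.trans h1)
      rw [mul_zero, add_zero, div_mul_eq_mul_div, le_div_iff₀ hc]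
      linarith
  have hsum : ∑ n ∈ Finset.range (N / 2 + 1), dimerWeight N J h n *
        (monomerDensity N n - m₀) ^ (2 * k + 2) ≤
      2 / c * (A / N * ∑ n ∈ Finset.range (N / 2 + 1), dimerWeight N J h n) +
      B * (C / N * ∑ n ∈ Finset.range (N / 2 + 1), dimerWeight N J h n) := by
    refine (Finset.sum_le_sum fun n _ =>
      mul_le_mul_of_nonneg_left (hpt n) (dimerWeight_pos N J h n).le).trans ?_
    have h1 := sum_dimerWeight_criticalFactor_le hJ h hm₀ hN
    have h2 := hC N hN
    have hB0 : 0 ≤ B := by positivity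
    calc _ = 2 / c * ∑ n ∈ Finset.range (N / 2 + 1), dimerWeight N J h n *
            (criticalFactor J h (monomerDensity N n) * (monomerDensity N n - m₀)) +
          B * ∑ n ∈ Finset.range (N / 2 + 1), dimerWeight N J h n *
            (if min δ (1 - m₀) ≤ |monomerDensity N n - m₀| then 1 else 0) := by
          rw [Finset.mul_sum, Finset.mul_sum, ← Finset.sum_add_distrib]
          refine Finset.sum_congr rfl fun n _ => ?_
          ring
      _ ≤ _ := by gcongr
  refine (mul_le_mul_of_nonneg_left hsum hN0.le).trans_eq ?_
  field_simp
end

section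
/- For every t ∈ {0,1,…,N}, ∑_{σ∈Σ} 1(|𝓐(σ)| = t)·D(σ)·e^{−H(σ)} = ∑_{D∈𝓓} 1(|𝓜(D)| = t)·e^{−H(D)}. Consequently, the probability that m(σ) = t/N under the weighted Curie–Weiss Gibbs measure equals the probability that m(D) = t/N under the IMD Gibbs measure. -/
open Real Finset MeasureTheory

/-- Spin configurations are determined by their set of up-spins. -/
theorem ASet_bijective (N : ℕ) : Function.Bijective (ASet : Config N → Finset (Fin N)) := by
  refine ⟨fun σ τ hστ => ?_, fun s => ⟨fun i => decide (i ∈ s), by ext i; simp [ASet]⟩⟩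
  funext i
  have hi : i ∈ ASet σ ↔ i ∈ ASet τ := by rw [hστ]
  simp only [ASet, mem_filter, mem_univ, true_and] at hi
  exact Bool.eq_iff_iff.mpr hi

/-- Summing over spin configurations with multiplicity `D(σ)` is summing over dimer
configurations. -/
theorem sum_Dcount_mul (N : ℕ) (g : Finset (Fin N) → ℝ) :
    ∑ σ : Config N, (Dcount N σ : ℝ) * g (ASet σ) = ∑ D : Dimer N, g (monomers D) := by
  calc ∑ σ : Config N, (Dcount N σ : ℝ) * g (ASet σ)
      = ∑ s : Finset (Fin N), ((univ.filter fun D : Dimer N => monomers D = s).card : ℝ) * g s :=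
        (ASet_bijective N).sum_comp
          fun s => ((univ.filter fun D : Dimer N => monomers D = s).card : ℝ) * g s
    _ = ∑ D : Dimer N, g (monomers D) := by
        rw [← Finset.sum_fiberwise' univ monomers g]
        simp

/-- Weighting by any function `f` of the set of up-spins (respectively monomers), the two models
have the same total weight. -/
theorem sum_mul_wConf (N : ℕ) (J h : ℝ) (f : Finset (Fin N) → ℝ) :
    ∑ σ : Config N, f (ASet σ) * wConf N J h σ = ∑ D : Dimer N, f (monomers D) * wDim N J h D := by
  refine Eq.trans ?_ (sum_Dcount_mul N fun s => f s * Real.exp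
    (N * (J * ((s.card : ℝ) / N) ^ 2 + bIMD N J h * ((s.card : ℝ) / N))))
  refine sum_congr rfl fun σ _ => ?_
  simp only [wConf, mConf, Msum]
  ring

/-- The weighted Curie–Weiss model is a reformulation of the IMD
model: for each `t ∈ {0,…,N}`, `∑_σ 1(|𝓐(σ)|=t) D(σ) e^{-H(σ)} = ∑_D 1(|𝓜(D)|=t) e^{-H(D)}`,
and consequently the laws of the magnetization and of the monomer density agree. -/
theorem stmt12 (J h : ℝ) (N : ℕ) (hN : 1 ≤ N) (t : ℕ) (ht : t ≤ N) :
    (∑ σ : Config N, (if Msum σ = t then (1:ℝ) else 0) * wConf N J h σ)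
      = (∑ D : Dimer N, (if (monomers D).card = t then (1:ℝ) else 0) * wDim N J h D) ∧
    probConf N J h (fun σ => mConf σ = (t:ℝ)/N)
      = probDim N J h (fun D => mDim D = (t:ℝ)/N) := by
  classical
  refine ⟨sum_mul_wConf N J h fun s => if s.card = t then 1 else 0, ?_⟩
  have hnum := sum_mul_wConf N J h fun s => if (s.card : ℝ) / N = (t : ℝ) / N then 1 else 0
  have hden := sum_mul_wConf N J h fun _ => 1
  simp only [one_mul] at hden
  simp only [ite_mul, one_mul, zero_mul] at hnum
  simp only [probConf, probDim, Set.indicator_apply, Set.mem_ofPred_eq, mConf, Msum, mDim]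
  rw [hden, hnum]
end
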